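/- arXiv:1207.3262 — 6 statements merged into one kernel-verified Lean document; each statement's English description precedes it below -/
import Mathlib

section
/- Soundness of canonized rewriting (Lemma 4.2 instantiated with the AC canonizer): fix a linear order ⊴ on ground terms. For all ground terms s, t', l, r, if s rewrites to t' modulo AC by the rule l → r (i.e. s →_{AC\l→r} t') and t = can_AC(t'), then s =_{AC∪{(l,r)}} t, i.e. s and t are equal in the smallest congruence on ground terms containing AC-equality and the pair (l, r). -/
/-!
A rewriting step `s →_{AC\l→r} t'` only replaces a subterm, up to AC-equality, by one that is
equal to it modulo the pair `(l, r)`, so `s =_{AC∪{(l,r)}} t'` by closure under contexts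
(`Rw.eqACE`). It remains to see that the canonizer preserves AC-equality classes
(`eqACE_canAC`). Every term is AC-equal to the right comb over some enumeration of its `u`-aliens
(`exists_isComb_aliens`), the node `u(t₁,t₂)` is AC-equal to the comb over the concatenation of the
two enumerations (`IsComb.append`), and combs over permuted lists are AC-equal (`IsComb.perm`), so
sorting the aliens is harmless.
-/

/-- Ground terms over uninterpreted symbols `F` (with arities `ar`) and AC symbols `U`:
`app f ts` applies `f : F` to a tuple of `ar f` terms, `node u t₁ t₂` is `u(t₁,t₂)`. -/
inductive T (F : Type) (ar : F → ℕ) (U : Type) : Type where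
  | app : (f : F) → (Fin (ar f) → T F ar U) → T F ar U
  | node : U → T F ar U → T F ar U → T F ar U

variable (F : Type) (ar : F → ℕ) (U : Type)

/-- `EqACE E s t` : the smallest congruence on ground terms containing AC-equalities
(commutativity and associativity of every AC symbol) and the pairs of `E`. -/
inductive EqACE (E : Set (T F ar U × T F ar U)) : T F ar U → T F ar U → Prop where
  | ax : ∀ {s t : T F ar U}, (s, t) ∈ E → EqACE E s t
  | refl : ∀ t : T F ar U, EqACE E t t
  | symm : ∀ {s t : T F ar U}, EqACE E s t → EqACE E t s
  | trans : ∀ {s t w : T F ar U}, EqACE E s t → EqACE E t w → EqACE E s w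
  | congr_app : ∀ (f : F) (ts ts' : Fin (ar f) → T F ar U),
      (∀ i, EqACE E (ts i) (ts' i)) → EqACE E (.app f ts) (.app f ts')
  | congr_node : ∀ (u : U) {s₁ t₁ s₂ t₂ : T F ar U}, EqACE E s₁ t₁ → EqACE E s₂ t₂ →
      EqACE E (.node u s₁ s₂) (.node u t₁ t₂)
  | comm : ∀ (u : U) (x y : T F ar U), EqACE E (.node u x y) (.node u y x)
  | assoc : ∀ (u : U) (x y z : T F ar U),
      EqACE E (.node u x (.node u y z)) (.node u (.node u x y) z)

/-- AC-equality `=_AC`: the smallest congruence containing the AC axioms. -/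
abbrev ACeq : T F ar U → T F ar U → Prop := EqACE F ar U ∅

/-- Ground rewriting modulo AC with the rule `l → r` : `Rw l r s t` holds iff `s` rewrites
to `t` modulo AC by `l → r` at some position.  The first two constructors are the two kinds
of rewriting steps at the considered position (plain and extended), the last three close the
relation under all positions. -/
inductive Rw (l r : T F ar U) : T F ar U → T F ar U → Prop where
  | plain : ∀ {s : T F ar U}, ACeq F ar U s l → Rw l r s r
  | ext : ∀ (u : U) (l₁ l₂ : T F ar U) {s : T F ar U} (s' : T F ar U),
      l = .node u l₁ l₂ → ACeq F ar U s (.node u l s') → Rw l r s (.node u r s')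
  | congr_app : ∀ (f : F) (ts : Fin (ar f) → T F ar U) (i : Fin (ar f)) {t : T F ar U},
      Rw l r (ts i) t → Rw l r (.app f ts) (.app f (Function.update ts i t))
  | nodeL : ∀ (u : U) {s t : T F ar U} (w : T F ar U),
      Rw l r s t → Rw l r (.node u s w) (.node u t w)
  | nodeR : ∀ (u : U) (w : T F ar U) {s t : T F ar U},
      Rw l r s t → Rw l r (.node u w s) (.node u w t)

open Classical in
/-- The multiset `𝒜_u(t)` of `u`-aliens of a term `t`. -/
noncomputable def aliens (u : U) : T F ar U → Multiset (T F ar U)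
  | .node u' t₁ t₂ => if u' = u then aliens u t₁ + aliens u t₂ else {T.node u' t₁ t₂}
  | .app f ts => {T.app f ts}

/-- `comb1 u s₁ [s₂,…,sₙ]` is the right comb `u(s₁, u(s₂, …, u(s_{n-1}, sₙ)…))`. -/
def comb1 (u : U) : T F ar U → List (T F ar U) → T F ar U
  | t, [] => t
  | t, s :: ss => .node u t (comb1 u s ss)

/-- The AC canonizer `can_AC` (w.r.t. the fixed linear order `⊴` on terms): under each AC
symbol `u` it collects the `u`-aliens of the canonized arguments, sorts them w.r.t. `⊴`
and rebuilds a right comb.  (The `[]` branch is unreachable: the multiset of aliens always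
has at least two elements.) -/
noncomputable def canAC [LinearOrder (T F ar U)] : T F ar U → T F ar U
  | .app f ts => .app f (fun i => canAC (ts i))
  | .node u t₁ t₂ =>
      match (aliens F ar U u (canAC t₁) + aliens F ar U u (canAC t₂)).sort (· ≤ ·) with
      | [] => .node u (canAC t₁) (canAC t₂)
      | s :: ss => comb1 F ar U u s ss

section Canonizer

variable {F : Type} {ar : F → ℕ} {U : Type} {E : Set (T F ar U × T F ar U)}

/-- `IsComb E u L t`: the list `L` is nonempty and `t` equals, modulo AC and `E`, the right comb
over `L` with symbol `u`. -/
def IsComb (E : Set (T F ar U × T F ar U)) (u : U) : List (T F ar U) → T F ar U → Prop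
  | [], _ => False
  | s :: ss, t => EqACE F ar U E t (comb1 F ar U u s ss)

theorem IsComb.cons {u : U} {L : List (T F ar U)} {t : T F ar U} (x : T F ar U)
    (h : IsComb E u L t) : IsComb E u (x :: L) (.node u x t) := by
  cases L with
  | nil => exact h.elim
  | cons y L => exact .congr_node u (.refl x) h

theorem IsComb.of_eqACE {u : U} {L : List (T F ar U)} {s t : T F ar U}
    (hst : EqACE F ar U E s t) (h : IsComb E u L t) : IsComb E u L s := by
  cases L with
  | nil => exact h.elim
  | cons y L => exact hst.trans h

/-- Commutativity and associativity allow permuting the arguments of a comb. -/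
theorem IsComb.perm {u : U} {L L' : List (T F ar U)} (hp : L.Perm L') :
    ∀ {t : T F ar U}, IsComb E u L t → IsComb E u L' t := by
  induction hp with
  | nil => exact id
  | @cons x l₁ l₂ hp ih =>
    intro t h
    cases l₁ with
    | nil => rw [List.nil_perm.mp hp]; exact h
    | cons y l₁ => exact .of_eqACE h (.cons x (ih (.refl _)))
  | swap x y l =>
    intro t h
    cases l with
    | nil => exact .trans h (.comm u y x)
    | cons z l =>
      exact .trans h <| .trans (.assoc u y x _) <|
        .trans (.congr_node u (.comm u y x) (.refl _)) (.symm (.assoc u x y _))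
  | trans _ _ ih₁ ih₂ => exact fun h => ih₂ (ih₁ h)

theorem IsComb.append {u : U} {L₁ L₂ : List (T F ar U)} :
    ∀ {t₁ t₂ : T F ar U}, IsComb E u L₁ t₁ → IsComb E u L₂ t₂ →
      IsComb E u (L₁ ++ L₂) (.node u t₁ t₂) := by
  induction L₁ with
  | nil => exact fun h => h.elim
  | cons x L ih =>
    intro t₁ t₂ h₁ h₂
    cases L with
    | nil => exact .of_eqACE (.congr_node u h₁ (.refl _)) (.cons x h₂)
    | cons y L =>
      exact .of_eqACE (.trans (.congr_node u h₁ (.refl _)) (.symm (.assoc u x _ t₂)))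
        (.cons x (ih (.refl _) h₂))

theorem exists_isComb_aliens (E : Set (T F ar U × T F ar U)) (u : U) (t : T F ar U) :
    ∃ L : List (T F ar U), (L : Multiset (T F ar U)) = aliens F ar U u t ∧ IsComb E u L t := by
  induction t with
  | app f ts => exact ⟨[.app f ts], by simp [aliens], .refl _⟩
  | node v t₁ t₂ ih₁ ih₂ =>
    by_cases hv : v = u
    · subst hv
      obtain ⟨L₁, e₁, h₁⟩ := ih₁
      obtain ⟨L₂, e₂, h₂⟩ := ih₂
      exact ⟨L₁ ++ L₂, by simp [aliens, ← e₁, ← e₂], h₁.append h₂⟩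
    · exact ⟨[.node v t₁ t₂], by simp [aliens, hv], .refl _⟩

/-- The canonizer maps every term to an AC-equal one. -/
theorem eqACE_canAC [LinearOrder (T F ar U)] (E : Set (T F ar U × T F ar U)) (t : T F ar U) :
    EqACE F ar U E t (canAC F ar U t) := by
  induction t with
  | app f ts ih =>
    rw [canAC]
    exact .congr_app f _ _ ih
  | node u t₁ t₂ ih₁ ih₂ =>
    obtain ⟨L₁, e₁, h₁⟩ := exists_isComb_aliens E u (canAC F ar U t₁)
    obtain ⟨L₂, e₂, h₂⟩ := exists_isComb_aliens E u (canAC F ar U t₂)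
    have hp : (L₁ ++ L₂).Perm
        ((aliens F ar U u (canAC F ar U t₁) + aliens F ar U u (canAC F ar U t₂)).sort
          (· ≤ ·)) := by
      rw [← Multiset.coe_eq_coe, Multiset.sort_eq, ← e₁, ← e₂, Multiset.coe_add]
    have h := ((h₁.append h₂).of_eqACE (.congr_node u ih₁ ih₂)).perm hp
    rw [canAC]
    split
    · next heq => rw [heq] at h; exact h.elim
    · next heq => rw [heq] at h; exact h

theorem EqACE.mono {E' : Set (T F ar U × T F ar U)} (hE : E ⊆ E') {s t : T F ar U}
    (h : EqACE F ar U E s t) : EqACE F ar U E' s t := by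
  induction h with
  | ax h => exact .ax (hE h)
  | refl t => exact .refl t
  | symm _ ih => exact ih.symm
  | trans _ _ ih₁ ih₂ => exact ih₁.trans ih₂
  | congr_app f ts ts' _ ih => exact .congr_app f ts ts' ih
  | congr_node u _ _ ih₁ ih₂ => exact .congr_node u ih₁ ih₂
  | comm u x y => exact .comm u x y
  | assoc u x y z => exact .assoc u x y z

theorem Rw.eqACE {l r s t : T F ar U} (h : Rw F ar U l r s t) :
    EqACE F ar U {(l, r)} s t := by
  induction h with
  | plain h => exact .trans (h.mono (Set.empty_subset _)) (.ax rfl)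
  | ext u l₁ l₂ s' _ h =>
    exact .trans (h.mono (Set.empty_subset _)) (.congr_node u (.ax rfl) (.refl s'))
  | congr_app f ts i _ ih =>
    refine .congr_app f _ _ fun j => ?_
    by_cases hj : j = i
    · subst hj; simpa using ih
    · rw [Function.update_of_ne hj]; exact .refl _
  | nodeL u w _ ih => exact .congr_node u ih (.refl w)
  | nodeR u w _ ih => exact .congr_node u (.refl w) ih

end Canonizer

/-- Soundness of canonized rewriting with the AC canonizer. -/
theorem stmt1 [LinearOrder (T F ar U)] (s t' t l r : T F ar U)
    (h : Rw F ar U l r s t') (hc : canAC F ar U t' = t) :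
    EqACE F ar U {(l, r)} s t := by
  subst hc
  exact h.eqACE.trans (eqACE_canAC _ t')
end

section
/- Idempotence of the AC canonizer: fix a linear order ⊴ on ground terms; then for every ground term t, can_AC(can_AC(t)) = can_AC(t). -/
variable (F : Type) (ar : F → ℕ) (U : Type)

lemma aliens_card_pos (u : U) (t : T F ar U) : 0 < (aliens F ar U u t).card := by
  induction t with
  | app f ts _ => simp [aliens]
  | node v t₁ t₂ ih₁ ih₂ =>
    rw [aliens]
    split_ifs
    · rw [Multiset.card_add]; omega
    · simp

lemma aliens_of_mem_aliens (u : U) (t : T F ar U) :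
    ∀ a ∈ aliens F ar U u t, aliens F ar U u a = {a} := by
  induction t with
  | app f ts _ => simp [aliens]
  | node v t₁ t₂ ih₁ ih₂ =>
    intro a ha
    rw [aliens] at ha
    split_ifs at ha with h
    · rcases Multiset.mem_add.1 ha with ha | ha
      exacts [ih₁ a ha, ih₂ a ha]
    · rw [Multiset.mem_singleton.1 ha, aliens, if_neg h]

lemma aliens_comb1 (u : U) (s : T F ar U) (ss : List (T F ar U))
    (h : ∀ a ∈ s :: ss, aliens F ar U u a = {a}) :
    aliens F ar U u (comb1 F ar U u s ss) = ↑(s :: ss) := by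
  induction ss generalizing s with
  | nil => simpa [comb1] using h
  | cons s' ss ih =>
    rw [comb1, aliens, if_pos rfl, h s (by simp), ih s' (fun a ha => h a (by simp_all))]
    rfl

lemma canAC_comb1 [LinearOrder (T F ar U)] (u : U) (s : T F ar U) (ss : List (T F ar U))
    (h : ∀ a ∈ s :: ss, aliens F ar U u a = {a})
    (hc : ∀ a ∈ s :: ss, canAC F ar U a = a)
    (hs : (s :: ss).Pairwise (· ≤ ·)) :
    canAC F ar U (comb1 F ar U u s ss) = comb1 F ar U u s ss := by
  induction ss generalizing s with
  | nil => simpa [comb1] using hc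
  | cons s' ss ih =>
    have h' : ∀ a ∈ s' :: ss, aliens F ar U u a = {a} := fun a ha => h a (by simp_all)
    have ih' := ih s' h' (fun a ha => hc a (by simp_all)) hs.tail
    have hsum : (aliens F ar U u s + aliens F ar U u (comb1 F ar U u s' ss)).sort (· ≤ ·)
        = s :: s' :: ss := by
      rw [h s (by simp), aliens_comb1 F ar U u s' ss h', Multiset.singleton_add,
        Multiset.cons_coe, Multiset.coe_sort]
      exact List.mergeSort_eq_self _ hs
    rw [comb1, canAC, ih', hc s (by simp), hsum]
    rfl

/-- The strengthened induction: besides `canAC t`, all its `u`-aliens are fixed points. -/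
lemma canAC_fixed [LinearOrder (T F ar U)] (t : T F ar U) :
    canAC F ar U (canAC F ar U t) = canAC F ar U t ∧
      ∀ u, ∀ a ∈ aliens F ar U u (canAC F ar U t), canAC F ar U a = a := by
  induction t with
  | app f ts ih =>
    have h : canAC F ar U (canAC F ar U (.app f ts)) = canAC F ar U (.app f ts) := by
      simp only [canAC, (ih _).1]
    refine ⟨h, fun u a ha => ?_⟩
    rw [canAC, aliens, Multiset.mem_singleton] at ha
    rw [ha, ← canAC, h]
  | node v t₁ t₂ ih₁ ih₂ =>
    have hcard := aliens_card_pos F ar U v (canAC F ar U t₁)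
    have hcard' := aliens_card_pos F ar U v (canAC F ar U t₂)
    obtain ⟨l, hl⟩ : ∃ l, l =
      (aliens F ar U v (canAC F ar U t₁) + aliens F ar U v (canAC F ar U t₂)).sort (· ≤ ·) :=
      ⟨_, rfl⟩
    have hlen : 2 ≤ l.length := by
      rw [hl, Multiset.length_sort, Multiset.card_add]; omega
    have hsorted : l.Pairwise (· ≤ ·) := hl ▸ Multiset.pairwise_sort _ _
    have hmem : ∀ a ∈ l, aliens F ar U v a = {a} ∧ canAC F ar U a = a := by
      intro a ha
      rw [hl, Multiset.mem_sort, Multiset.mem_add] at ha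
      rcases ha with ha | ha
      · exact ⟨aliens_of_mem_aliens F ar U v _ a ha, ih₁.2 v a ha⟩
      · exact ⟨aliens_of_mem_aliens F ar U v _ a ha, ih₂.2 v a ha⟩
    rw [canAC, ← hl]
    match l, hlen, hsorted, hmem with
    | s :: s' :: ss, _, hsorted, hmem =>
      have hfix := canAC_comb1 F ar U v s (s' :: ss) (fun a ha => (hmem a ha).1)
        (fun a ha => (hmem a ha).2) hsorted
      refine ⟨hfix, fun u a ha => ?_⟩
      by_cases huv : v = u
      · subst huv
        dsimp only at ha
        rw [aliens_comb1 F ar U v s (s' :: ss) (fun a ha => (hmem a ha).1)] at ha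
        exact (hmem a ha).2
      · dsimp only at ha
        rw [comb1, aliens, if_neg huv, Multiset.mem_singleton] at ha
        rw [ha]
        exact hfix

/-- Idempotence of the AC canonizer. -/
theorem stmt3 [LinearOrder (T F ar U)] (t : T F ar U) :
    canAC F ar U (canAC F ar U t) = canAC F ar U t := by
  exact (canAC_fixed F ar U t).1
end

section
/- Finiteness of the set of reducts of a finitely branching relation contained in a well-founded order: let α be a type, ≺ a well-founded binary relation on α, and r a binary relation on α such that (i) whenever r a b holds then b ≺ a, and (ii) for every a the set {b | r a b} is finite. Then for every a, the set {b | a reduces to b in finitely many r-steps} (the set of b with ReflTransGen r a b) is finite. -/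
/-- The set of reducts of a finitely branching relation contained in a
well-founded order is finite. -/
theorem stmt7 {α : Type*} (prec : α → α → Prop) (hwf : WellFounded prec)
    (r : α → α → Prop) (hsub : ∀ a b, r a b → prec b a)
    (hfin : ∀ a, {b | r a b}.Finite) (a : α) :
    {b | Relation.ReflTransGen r a b}.Finite := by
  induction a using hwf.induction with
  | _ a ih =>
    -- A reduct of `a` is `a` itself or a reduct of one of its finitely many one-step successors.
    have hunion : (⋃ c ∈ {c | r a c}, {b | Relation.ReflTransGen r c b}).Finite :=
      (hfin a).biUnion fun c hc => ih c (hsub a c hc)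
    refine (hunion.insert a).subset fun b hb => ?_
    rcases Relation.ReflTransGen.cases_head hb with rfl | ⟨c, hac, hcb⟩
    · exact Set.mem_insert _ _
    · exact Set.mem_insert_of_mem _ (Set.mem_biUnion hac hcb)
end

section
/- Infinite sequences of multisets over a finite carrier contain an increasing pair (the Higman-style argument used for termination of ground AC-completion): let α be a type, S : Finset α a finite set, and f : ℕ → Multiset α a sequence of multisets such that for every n, every element of f n belongs to S. Then there exist indices i < j such that f i is contained in f j as a multiset (f i ≤ f j). -/
/-- Any infinite sequence of multisets over a finite carrier contains an
increasing pair (Higman-style argument). -/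
theorem stmt8 {α : Type*} (S : Finset α) (f : ℕ → Multiset α)
    (hf : ∀ n, ∀ x ∈ f n, x ∈ S) :
    ∃ i j, i < j ∧ f i ≤ f j := by
  classical
  -- By the Dickson lemma, `S → ℕ` is well quasi-ordered; apply it to the multiplicity functions.
  obtain ⟨i, j, hij, h⟩ := wellQuasiOrdered_le (α := S → ℕ)
    (fun n (a : S) => (f n).count (a : α))
  refine ⟨i, j, hij, Multiset.le_iff_count.2 fun a => ?_⟩
  by_cases ha : a ∈ S
  · exact h ⟨a, ha⟩
  · rw [Multiset.count_eq_zero_of_notMem fun hm => ha (hf i a hm)]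
    exact Nat.zero_le _
end

section
/- Cardinality of an AC-equivalence class of a flat term: consider ground terms over a signature with a single binary AC symbol u and constants c₁, …, c_{n+1} (uninterpreted symbols of arity 0) that are pairwise distinct, with n ≥ 1. Let t be the right comb u(c₁, u(c₂, …, u(c_n, c_{n+1})…)). Then the set {t' | t' =_AC t} of ground terms AC-equal to t is finite and has exactly (2n)!/n! elements. -/
variable (F : Type) (ar : F → ℕ) (U : Type)

namespace ACClass

variable {F}

/-- Ground terms over constants from `F` and a single AC symbol. -/
abbrev GTerm (F : Type) : Type := T F (fun _ => 0) Unit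

/-- The constant `f` as a term. -/
def const (f : F) : GTerm F := T.app f (fun j => j.elim0)

/-- The constants occurring in a term, read from left to right. -/
def leaves : GTerm F → List F
  | .app f _ => [f]
  | .node _ a b => leaves a ++ leaves b

/-- The binary tree underlying a term; constants become the empty tree, so that the nodes of the
shape are exactly the occurrences of the AC symbol. -/
def shape : GTerm F → BinaryTree Unit
  | .app _ _ => .nil
  | .node _ a b => .node () (shape a) (shape b)

lemma app_eq_const (f : F) (ts : Fin 0 → GTerm F) : (T.app f ts : GTerm F) = const f := by
  unfold const
  congr 1
  exact Subsingleton.elim _ _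

lemma length_leaves (t : GTerm F) : (leaves t).length = (shape t).numNodes + 1 := by
  induction t with
  | app f ts => simp [leaves, shape, BinaryTree.numNodes]
  | node u a b iha ihb => simp [leaves, shape, BinaryTree.numNodes, iha, ihb]; omega

lemma eq_of_shape_leaves (a b : GTerm F) (hs : shape a = shape b) (hl : leaves a = leaves b) :
    a = b := by
  induction a generalizing b with
  | app f ts =>
    cases b with
    | app g us =>
      simp only [leaves, List.cons.injEq, and_true] at hl
      subst hl
      rw [app_eq_const f ts, app_eq_const f us]
    | node v b₁ b₂ => simp [shape] at hs
  | node u a₁ a₂ ih₁ ih₂ =>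
    cases b with
    | app g us => simp [shape] at hs
    | node v b₁ b₂ =>
      simp only [shape, BinaryTree.node.injEq, true_and] at hs
      simp only [leaves] at hl
      -- equal shapes force the two leaf lists to split at the same place
      obtain ⟨h₁, h₂⟩ := List.append_inj hl (by rw [length_leaves, length_leaves, hs.1])
      rw [ih₁ b₁ hs.1 h₁, ih₂ b₂ hs.2 h₂]

lemma shape_leaves_injective :
    Function.Injective (fun t : GTerm F => (shape t, leaves t)) := fun a b h =>
  eq_of_shape_leaves a b (congrArg Prod.fst h) (congrArg Prod.snd h)

lemma exists_of_shape_leaves (s : BinaryTree Unit) (l : List F) (h : l.length = s.numNodes + 1) :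
    ∃ t : GTerm F, shape t = s ∧ leaves t = l := by
  induction s generalizing l with
  | nil =>
    obtain ⟨f, rfl⟩ := List.length_eq_one_iff.mp (by simpa [BinaryTree.numNodes] using h)
    exact ⟨const f, rfl, rfl⟩
  | node u s₁ s₂ ih₁ ih₂ =>
    simp only [BinaryTree.numNodes] at h
    obtain ⟨t₁, hs₁, hl₁⟩ := ih₁ (l.take (s₁.numNodes + 1)) (by simp; omega)
    obtain ⟨t₂, hs₂, hl₂⟩ := ih₂ (l.drop (s₁.numNodes + 1)) (by simp; omega)
    exact ⟨.node () t₁ t₂, by simp [shape, hs₁, hs₂], by simp [leaves, hl₁, hl₂]⟩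

lemma perm_of_aceq {s t : GTerm F} (h : ACeq _ _ _ s t) : (leaves s).Perm (leaves t) := by
  induction h with
  | ax h => exact absurd h (Set.notMem_empty _)
  | refl t => exact .refl _
  | symm _ ih => exact ih.symm
  | trans _ _ ih₁ ih₂ => exact ih₁.trans ih₂
  | congr_app f ts ts' _ _ => exact .refl _
  | congr_node u _ _ ih₁ ih₂ => exact ih₁.append ih₂
  | comm u x y => exact List.perm_append_comm
  | assoc u x y z => simp [leaves]

/-- AC-equality as a setoid on terms. -/
def acSetoid (F : Type) : Setoid (GTerm F) where
  r := ACeq _ _ _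
  iseqv := ⟨.refl, .symm, .trans⟩

/-- Terms modulo AC-equality. -/
abbrev ACQuot (F : Type) : Type := Quotient (acSetoid F)

/-- The AC symbol induces a commutative semigroup structure on the quotient. -/
instance : CommSemigroup (ACQuot F) where
  mul := Quotient.map₂ (T.node ()) fun _ _ h₁ _ _ h₂ => EqACE.congr_node () h₁ h₂
  mul_assoc := by
    rintro ⟨x⟩ ⟨y⟩ ⟨z⟩
    exact Quotient.sound (EqACE.assoc () x y z).symm
  mul_comm := by
    rintro ⟨x⟩ ⟨y⟩
    exact Quotient.sound (EqACE.comm () x y)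

/-- The class of a term is the product of the classes of its leaves; the unit is adjoined only so
that products of arbitrary lists make sense. -/
lemma coe_mk_eq_prod (t : GTerm F) :
    ((Quotient.mk (acSetoid F) t : ACQuot F) : WithOne (ACQuot F)) =
      ((leaves t).map fun f =>
        ((Quotient.mk (acSetoid F) (const f) : ACQuot F) : WithOne (ACQuot F))).prod := by
  induction t with
  | app f ts => rw [app_eq_const]; simp [leaves, const]
  | node u a b iha ihb =>
    rw [leaves, List.map_append, List.prod_append, ← iha, ← ihb, ← WithOne.coe_mul]
    rfl

lemma aceq_iff_perm (s t : GTerm F) : ACeq _ _ _ s t ↔ (leaves s).Perm (leaves t) := by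
  refine ⟨perm_of_aceq, fun h => ?_⟩
  have key : ((Quotient.mk (acSetoid F) s : ACQuot F) : WithOne (ACQuot F)) =
      (Quotient.mk (acSetoid F) t : ACQuot F) := by
    rw [coe_mk_eq_prod, coe_mk_eq_prod]
    exact (h.map _).prod_eq
  exact Quotient.exact (WithOne.coe_injective key)

lemma leaves_comb1 (f : F) (l : List F) :
    leaves (comb1 _ _ _ () (const f) (l.map const)) = f :: l := by
  induction l generalizing f with
  | nil => rfl
  | cons g l ih => exact congrArg (f :: ·) (ih g)

lemma catalan_mul_factorial (n : ℕ) :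
    catalan n * (n + 1).factorial = (2 * n).factorial / n.factorial := by
  symm
  apply Nat.div_eq_of_eq_mul_left n.factorial_pos
  have h₁ := succ_mul_catalan_eq_centralBinom n
  have h₂ := Nat.choose_mul_factorial_mul_factorial (show n ≤ 2 * n by omega)
  rw [← Nat.centralBinom_eq_two_mul_choose, ← h₁, show 2 * n - n = n by omega] at h₂
  rw [← h₂, Nat.factorial_succ]
  ring

/-- The class of a term is identified by `(shape, leaves)` with the pairs of a binary tree having
as many nodes as the term and a permutation of its leaves. -/
lemma image_class {n : ℕ} (t : GTerm F) {l : List F} (hl : leaves t = l)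
    (hn : l.length = n + 1) :
    (fun t : GTerm F => (shape t, leaves t)) '' {t' | ACeq _ _ _ t' t} =
      (BinaryTree.treesOfNumNodesEq n : Set (BinaryTree Unit)) ×ˢ {l' | l'.Perm l} := by
  ext ⟨s, l'⟩
  simp only [Set.mem_image, Set.mem_ofPred_eq, Prod.mk.injEq, Set.mem_prod, Finset.mem_coe,
    BinaryTree.mem_treesOfNumNodesEq, aceq_iff_perm, hl]
  constructor
  · rintro ⟨t', hp, rfl, rfl⟩
    refine ⟨?_, hp⟩
    have := length_leaves t'
    rw [hp.length_eq] at this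
    omega
  · rintro ⟨hs, hp⟩
    obtain ⟨t', h₁, h₂⟩ := exists_of_shape_leaves s l' (by rw [hp.length_eq, hn, hs])
    exact ⟨t', h₂ ▸ hp, h₁, h₂⟩

end ACClass

open ACClass

/-- The AC-equivalence class of the right comb `u(c₀, u(c₁, …, u(c_{n-1}, cₙ)…))` over
`n+1` pairwise distinct constants and a single AC symbol has exactly `(2n)!/n!` elements. -/
theorem stmt11 (n : ℕ) (hn : 1 ≤ n)
    (c : Fin (n + 1) → T (Fin (n + 1)) (fun _ => 0) Unit)
    (hc : ∀ i, c i = T.app i (fun j => j.elim0))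
    (t : T (Fin (n + 1)) (fun _ => 0) Unit)
    (ht : t = comb1 _ _ _ () (c 0) (((List.finRange (n + 1)).drop 1).map c)) :
    {t' | ACeq _ _ _ t' t}.Finite ∧
      {t' | ACeq _ _ _ t' t}.ncard = (2 * n).factorial / n.factorial := by
  obtain rfl : c = const := funext hc
  have hfr : leaves t = List.finRange (n + 1) := by
    rw [ht, leaves_comb1]
    simp [List.finRange_succ]
  have himg := image_class t hfr (List.length_finRange)
  have hperm : {l' | l'.Perm (List.finRange (n + 1))} =
      ((List.finRange (n + 1)).permutations.toFinset : Set (List (Fin (n + 1)))) := by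
    ext l'
    simp
  rw [hperm, ← Finset.coe_product] at himg
  constructor
  · apply Set.Finite.of_finite_image _ shape_leaves_injective.injOn
    rw [himg]
    exact Finset.finite_toSet _
  · rw [← Set.ncard_image_of_injective _ shape_leaves_injective, himg, Set.ncard_coe_finset,
      Finset.card_product, BinaryTree.treesOfNumNodesEq_card_eq_catalan,
      List.toFinset_card_of_nodup (List.nodup_permutations _ (List.nodup_finRange _)),
      List.length_permutations, List.length_finRange, catalan_mul_factorial]
end

section
/- Soundness of ground AC-completion (the soundness invariant, Theorem on soundness instantiated with the AC theory): fix an arbitrary binary relation ≺ on ground terms. For any configuration ⟨E, R⟩ reachable from the initial configuration ⟨E₀, ∅⟩ by finitely many applications of the inference rules Trivial, Orient, Simplify, Compose, Collapse and Deduce, every pair (s,t) in E ∪ R satisfies s =_{AC∪E₀} t. -/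
variable (F : Type) (ar : F → ℕ) (U : Type)

/-- `RwR R s t` : `s` rewrites to `t` modulo AC by some rule of `R`. -/
def RwR (R : Set (T F ar U × T F ar U)) (s t : T F ar U) : Prop :=
  ∃ l r, (l, r) ∈ R ∧ Rw F ar U l r s t

/-- One inference step of ground AC-completion on configurations `⟨E, R⟩`,
parameterized by an ordering `prec` on ground terms. -/
inductive Step (prec : T F ar U → T F ar U → Prop) :
    Set (T F ar U × T F ar U) × Set (T F ar U × T F ar U) →
    Set (T F ar U × T F ar U) × Set (T F ar U × T F ar U) → Prop where
  | trivial : ∀ E R (s t : T F ar U), ACeq F ar U s t →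
      Step prec (insert (s, t) E, R) (E, R)
  | orient : ∀ E R (s t : T F ar U), prec t s →
      Step prec (insert (s, t) E, R) (E, insert (s, t) R)
  | simplify : ∀ E R (s s' t : T F ar U), RwR F ar U R s s' →
      Step prec (insert (s, t) E, R) (insert (s', t) E, R)
  | compose : ∀ E R (l r r' : T F ar U), RwR F ar U R r r' →
      Step prec (E, insert (l, r) R) (E, insert (l, r') R)
  | collapse : ∀ E R (g d l r l' : T F ar U), Rw F ar U g d l l' →
      Step prec (E, insert (g, d) (insert (l, r) R)) (insert (l', r) E, insert (g, d) R)
  | deduce : ∀ E R (u : U) (l r l' r' a b b' : T F ar U), (l, r) ∈ R → (l', r') ∈ R →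
      ACeq F ar U l (.node u a b) → ACeq F ar U l' (.node u a b') →
      Step prec (E, R) (insert (T.node u b r', T.node u b' r) E, R)

variable {F ar U} in
/-- Congruences generated by `AC ∪ E` contain pure AC-equality. -/
theorem ACeq.toEqACE {E : Set (T F ar U × T F ar U)} {s t : T F ar U}
    (h : ACeq F ar U s t) : EqACE F ar U E s t := by
  induction h with
  | ax h => exact absurd h (Set.notMem_empty _)
  | refl t => exact .refl t
  | symm _ ih => exact .symm ih
  | trans _ _ ih₁ ih₂ => exact .trans ih₁ ih₂
  | congr_app f ts ts' _ ih => exact .congr_app f ts ts' ih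
  | congr_node u _ _ ih₁ ih₂ => exact .congr_node u ih₁ ih₂
  | comm u x y => exact .comm u x y
  | assoc u x y z => exact .assoc u x y z

variable {F ar U} in
theorem Rw.toEqACE {E : Set (T F ar U × T F ar U)} {l r s t : T F ar U}
    (hlr : EqACE F ar U E l r) (h : Rw F ar U l r s t) : EqACE F ar U E s t := by
  induction h with
  | plain h => exact .trans h.toEqACE hlr
  | ext u l₁ l₂ s' _ h => exact .trans h.toEqACE (.congr_node u hlr (.refl s'))
  | congr_app f ts i _ ih =>
    refine .congr_app f _ _ fun j => ?_
    rcases eq_or_ne j i with rfl | hj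
    · simpa using ih
    · simpa [hj] using EqACE.refl (ts j)
  | nodeL u w _ ih => exact .congr_node u ih (.refl w)
  | nodeR u w _ ih => exact .congr_node u (.refl w) ih

variable {F ar U} in
/-- The critical pair added by Deduce is valid: both sides equal the overlap
`u(a, u(b, b'))` modulo AC and the two rules. -/
theorem EqACE.deduce {E : Set (T F ar U × T F ar U)} (u : U)
    {l r l' r' a b b' : T F ar U}
    (h : EqACE F ar U E l r) (h' : EqACE F ar U E l' r')
    (hl : EqACE F ar U E l (.node u a b)) (hl' : EqACE F ar U E l' (.node u a b')) :
    EqACE F ar U E (.node u b r') (.node u b' r) := by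
  have h₁ : EqACE F ar U E (.node u b r') (.node u b (.node u a b')) :=
    .congr_node u (.refl b) (h'.symm.trans hl')
  have h₂ : EqACE F ar U E (.node u b' (.node u a b)) (.node u b' r) :=
    .congr_node u (.refl b') (hl.symm.trans h)
  have h₃ : EqACE F ar U E (.node u b (.node u a b')) (.node u b' (.node u a b)) :=
    (EqACE.assoc u b a b').trans
      ((EqACE.comm u _ b').trans (.congr_node u (.refl b') (.comm u b a)))
  exact h₁.trans (h₃.trans h₂)

variable {F ar U} in
/-- Every equation and every rule of the configuration `c` is a consequence of `AC ∪ E₀`. -/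
def Sound (E₀ : Set (T F ar U × T F ar U))
    (c : Set (T F ar U × T F ar U) × Set (T F ar U × T F ar U)) : Prop :=
  (∀ p ∈ c.1, EqACE F ar U E₀ p.1 p.2) ∧ (∀ p ∈ c.2, EqACE F ar U E₀ p.1 p.2)

variable {F ar U} in
theorem Step.sound {prec : T F ar U → T F ar U → Prop} {E₀ : Set (T F ar U × T F ar U)}
    {c c' : Set (T F ar U × T F ar U) × Set (T F ar U × T F ar U)}
    (h : Step F ar U prec c c') (hc : Sound E₀ c) : Sound E₀ c' := by
  cases h with
  | trivial E R s t _ =>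
    simp only [Sound, Set.forall_mem_insert] at hc ⊢
    exact ⟨hc.1.2, hc.2⟩
  | orient E R s t _ =>
    simp only [Sound, Set.forall_mem_insert] at hc ⊢
    exact ⟨hc.1.2, hc.1.1, hc.2⟩
  | simplify E R s s' t hrw =>
    simp only [Sound, Set.forall_mem_insert] at hc ⊢
    obtain ⟨⟨hst, hE⟩, hR⟩ := hc
    obtain ⟨l, r, hlr, hrw⟩ := hrw
    exact ⟨⟨(hrw.toEqACE (hR _ hlr)).symm.trans hst, hE⟩, hR⟩
  | compose E R l r r' hrw =>
    simp only [Sound, Set.forall_mem_insert] at hc ⊢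
    obtain ⟨hE, hlr, hR⟩ := hc
    obtain ⟨g, d, hgd, hrw⟩ := hrw
    exact ⟨hE, hlr.trans (hrw.toEqACE (hR _ hgd)), hR⟩
  | collapse E R g d l r l' hrw =>
    simp only [Sound, Set.forall_mem_insert] at hc ⊢
    obtain ⟨hE, hgd, hlr, hR⟩ := hc
    exact ⟨⟨(hrw.toEqACE hgd).symm.trans hlr, hE⟩, hgd, hR⟩
  | deduce E R u l r l' r' a b b' hlr hlr' hl hl' =>
    simp only [Sound, Set.forall_mem_insert] at hc ⊢
    obtain ⟨hE, hR⟩ := hc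
    exact ⟨⟨.deduce u (hR _ hlr) (hR _ hlr') hl.toEqACE hl'.toEqACE, hE⟩, hR⟩

/-- Soundness of ground AC-completion: every equation or rule of a configuration
reachable from `⟨E₀, ∅⟩` is a consequence of `E₀` modulo AC. -/
theorem stmt13 (prec : T F ar U → T F ar U → Prop)
    (E₀ E R : Set (T F ar U × T F ar U))
    (h : Relation.ReflTransGen (Step F ar U prec) (E₀, ∅) (E, R))
    (s t : T F ar U) (hst : (s, t) ∈ E ∪ R) :
    EqACE F ar U E₀ s t := by
  have hsound : Sound E₀ (E, R) := by
    clear hst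
    generalize (E, R) = c at h ⊢
    induction h with
    | refl => exact ⟨fun _ hp => .ax hp, fun _ hp => absurd hp (Set.notMem_empty _)⟩
    | tail _ hstep ih => exact hstep.sound ih
  exact hst.elim (hsound.1 (s, t)) (hsound.2 (s, t))
end
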